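/- The operator T₂ = (1/4)·I − (1/8)·V₂⊗I − (1/8)·(I⊗V₂)(V₂⊗I)(I⊗V₂) on ℂ² ⊗ ℂ² ⊗ ℂ² is a density operator: it is positive semidefinite and has trace 1. -/

import Mathlib

open Matrix Kronecker ComplexOrder

/-- The flip (swap) operator `V_d` on `ℂ^d ⊗ ℂ^d`, modeled as a matrix:
`V_d (ψ₁ ⊗ ψ₂) = ψ₂ ⊗ ψ₁`. -/
def flipM (d : ℕ) : Matrix (Fin d × Fin d) (Fin d × Fin d) ℂ :=
  fun p q => if p.1 = q.2 ∧ p.2 = q.1 then 1 else 0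

/-- `V_d ⊗ I` on `ℂ^d ⊗ ℂ^d ⊗ ℂ^d`: the Kronecker product `V_d ⊗ₖ I`, reindexed by the
associativity equivalence to the index type `Fin d × Fin d × Fin d`. -/
def V12 (d : ℕ) : Matrix (Fin d × Fin d × Fin d) (Fin d × Fin d × Fin d) ℂ :=
  Matrix.reindex (Equiv.prodAssoc (Fin d) (Fin d) (Fin d))
    (Equiv.prodAssoc (Fin d) (Fin d) (Fin d))
    (flipM d ⊗ₖ (1 : Matrix (Fin d) (Fin d) ℂ))

/-- `I ⊗ V_d` on `ℂ^d ⊗ ℂ^d ⊗ ℂ^d`. -/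
def V23 (d : ℕ) : Matrix (Fin d × Fin d × Fin d) (Fin d × Fin d × Fin d) ℂ :=
  (1 : Matrix (Fin d) (Fin d) ℂ) ⊗ₖ flipM d

/-- `Q_d = (1/6)·{ I − V_d⊗I − I⊗V_d − (I⊗V_d)(V_d⊗I)(I⊗V_d)
      + (I⊗V_d)(V_d⊗I) + (V_d⊗I)(I⊗V_d) }` on `ℂ^d ⊗ ℂ^d ⊗ ℂ^d`. -/
noncomputable def Q (d : ℕ) : Matrix (Fin d × Fin d × Fin d) (Fin d × Fin d × Fin d) ℂ :=
  ((6 : ℂ)⁻¹) • ((1 : Matrix (Fin d × Fin d × Fin d) (Fin d × Fin d × Fin d) ℂ)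
    - V12 d - V23 d - V23 d * V12 d * V23 d + V23 d * V12 d + V12 d * V23 d)


/-- The density source-operator
`T₂ = (1/4)·I − (1/8)·V₂⊗I − (1/8)·(I⊗V₂)(V₂⊗I)(I⊗V₂)` on `ℂ² ⊗ ℂ² ⊗ ℂ²`. -/
noncomputable def T2 : Matrix (Fin 2 × Fin 2 × Fin 2) (Fin 2 × Fin 2 × Fin 2) ℂ :=
  ((4 : ℂ)⁻¹) • (1 : Matrix (Fin 2 × Fin 2 × Fin 2) (Fin 2 × Fin 2 × Fin 2) ℂ)
    - ((8 : ℂ)⁻¹) • V12 2 - ((8 : ℂ)⁻¹) • (V23 2 * V12 2 * V23 2)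

/-!
Write `V = V₂ ⊗ I`, `U = I ⊗ V₂` and `W = U V U`, so that `T₂ = (1/8)((I - V) + (I - W))`. Since
`V` is a Hermitian involution, `(I - V)ᴴ(I - V) = 2(I - V)`, hence `I - V ≥ 0`; and `U` is a
Hermitian involution too, so `I - W = Uᴴ(I - V)U ≥ 0`. Conjugation also preserves the trace, so
`tr W = tr V = tr V₂ · tr I = 4` and `tr T₂ = (1/8)(4 + 4) = 1`.
-/

lemma posSemidef_one_sub_of_mul_self_eq_one {n 𝕜 : Type*} [Fintype n] [DecidableEq n] [RCLike 𝕜]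
    {V : Matrix n n 𝕜} (hV : V.IsHermitian) (hVV : V * V = 1) : (1 - V).PosSemidef := by
  have gram_eq : (1 - V)ᴴ * (1 - V) = (2 : 𝕜) • (1 - V) := by
    rw [conjTranspose_sub, conjTranspose_one, hV, sub_mul, one_mul, mul_sub, mul_one, hVV]
    module
  have one_sub_eq : 1 - V = (2 : 𝕜)⁻¹ • ((1 - V)ᴴ * (1 - V)) := by
    rw [gram_eq, inv_smul_smul₀ two_ne_zero]
  rw [one_sub_eq]
  exact (posSemidef_conjTranspose_mul_self (1 - V)).smul (by positivity)

lemma trace_reindex {m n R : Type*} [Fintype m] [Fintype n] [AddCommMonoid R] (e : m ≃ n)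
    (A : Matrix m m R) : (reindex e e A).trace = A.trace :=
  e.symm.sum_comp fun i ↦ A i i

section FlipOperators

variable (d : ℕ)

lemma flipM_eq_permMatrix : flipM d = Equiv.Perm.permMatrix ℂ (Equiv.prodComm (Fin d) (Fin d)) := by
  ext ⟨a, b⟩ ⟨c, e⟩
  simp [flipM, PEquiv.toMatrix_apply, and_comm]

lemma flipM_mul_self : flipM d * flipM d = 1 := by
  rw [flipM_eq_permMatrix, ← permMatrix_mul, ← permMatrix_one]
  rfl

lemma flipM_isHermitian : (flipM d).IsHermitian := by
  rw [IsHermitian, flipM_eq_permMatrix, conjTranspose_permMatrix]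
  rfl

lemma trace_flipM : (flipM d).trace = d := by
  rw [trace, Fintype.sum_prod_type]
  simp [flipM, eq_comm]

lemma V12_mul_self : V12 d * V12 d = 1 := by
  rw [V12, reindex_apply, submatrix_mul_equiv, ← mul_kronecker_mul, flipM_mul_self, mul_one,
    one_kronecker_one, submatrix_one_equiv]

lemma V12_isHermitian : (V12 d).IsHermitian := by
  rw [V12, isHermitian_reindex_iff, IsHermitian, conjTranspose_kronecker, conjTranspose_one,
    flipM_isHermitian]

lemma trace_V12 : (V12 d).trace = d ^ 2 := by
  rw [V12, trace_reindex, trace_kronecker, trace_flipM, trace_one, Fintype.card_fin, sq]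

lemma V23_mul_self : V23 d * V23 d = 1 := by
  rw [V23, ← mul_kronecker_mul, flipM_mul_self, mul_one, one_kronecker_one]

lemma V23_isHermitian : (V23 d).IsHermitian := by
  rw [V23, IsHermitian, conjTranspose_kronecker, conjTranspose_one, flipM_isHermitian]

lemma posSemidef_one_sub_V12 : (1 - V12 d).PosSemidef :=
  posSemidef_one_sub_of_mul_self_eq_one (V12_isHermitian d) (V12_mul_self d)

lemma posSemidef_one_sub_V23_mul_V12_mul_V23 : (1 - V23 d * V12 d * V23 d).PosSemidef := by
  have conj_eq : (V23 d)ᴴ * (1 - V12 d) * V23 d = 1 - V23 d * V12 d * V23 d := by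
    rw [V23_isHermitian, mul_sub, sub_mul, mul_one, V23_mul_self]
  exact conj_eq ▸ (posSemidef_one_sub_V12 d).conjTranspose_mul_mul_same (V23 d)

lemma trace_V23_mul_V12_mul_V23 : (V23 d * V12 d * V23 d).trace = d ^ 2 := by
  rw [trace_mul_comm, ← mul_assoc, V23_mul_self, one_mul, trace_V12]

end FlipOperators

lemma T2_eq_smul_add : T2 = (8 : ℂ)⁻¹ • ((1 - V12 2) + (1 - V23 2 * V12 2 * V23 2)) := by
  unfold T2
  module

/-- `T₂` is a density operator: positive semidefinite with trace `1`. -/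
theorem T2_isDensityOperator : T2.PosSemidef ∧ T2.trace = 1 := by
  rw [T2_eq_smul_add]
  constructor
  · exact ((posSemidef_one_sub_V12 2).add (posSemidef_one_sub_V23_mul_V12_mul_V23 2)).smul
      (by positivity)
  · simp only [trace_smul, trace_add, trace_sub, trace_one, trace_V12, trace_V23_mul_V12_mul_V23,
      Fintype.card_prod, Fintype.card_fin, smul_eq_mul]
    norm_num
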